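/- For all natural numbers p, q with p < q < 2p − ⌊|p−2|/2⌋ (an inequality of integers), and for every odd natural number l with 1 ≤ l ≤ F(p,q) − 1, there exist natural numbers p' ≤ p−1 and q' ≤ q−1 such that f(p',q') ⊕ f(p−1−p', q−1−q') = l. -/

import Mathlib

/-!
When `p` and `q` are positive, the mex recursion makes every positive value below `f p q` the value
of an option, so it is enough to know that `f` is large. In fact `f p p = 1` and
`f p q = 2 * min (min p q) (c (p + q))` for `p ≠ q`, where `c s = ⌊(2 s - 2) / 5⌋` except that
`c 3 = 1`; moreover `F p q ≤ 2 * c (p + q)`. This closed form satisfies the mex recursion: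

* Odd values below it: pair a diagonal position, of value `1`, with a position on the line through
  `(0, q - p)` parallel to the diagonal. Half the closed form starts at `0` on this line and grows
  by at most `1` per step, so it skips nothing.
* Even values below it: the same argument on a line parallel to the `p`-axis, paired with positions
  `(a, 0)` of value `0`, leaves over at most one value, which comes from an option involving
  `(0, 1)`, `(1, 2)` or `(2, 1)`.
* It is not itself the value of an option: by parity both parts of such an option would be off the
  diagonal, and the Nim-sum of their values is at most the sum, which is too small because
  `c s + c t < c (s + t + 2)` for `s, t ≥ 1`. Only `s = t = 3` violates this inequality, and the
  positions concerned are finitely many.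
-/

/-- `mex S` is the least natural number not belonging to `S`. -/
noncomputable def mex (S : Set ℕ) : ℕ := sInf {n : ℕ | n ∉ S}

/-- `h 0 = 0` and `h n = 1` for all `n ≥ 1`. -/
def h : ℕ → ℕ
  | 0 => 0
  | _ + 1 => 1

/-- The nimber of the Circular sprout game `CS₄(𝒫₄ : p,1,q,1)`, defined by strong
recursion: `f p q` is the mex of the set consisting of `h p ^^^ h q` together with all
values `f p' q' ^^^ f (p-1-p') (q-1-q')` for `0 ≤ p' ≤ p-1` and `0 ≤ q' ≤ q-1`. -/
noncomputable def f (p q : ℕ) : ℕ :=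
  mex ({h p ^^^ h q} ∪
    ⋃ (p' : ℕ) (_ : p' < p) (q' : ℕ) (_ : q' < q),
      {f p' q' ^^^ f (p - 1 - p') (q - 1 - q')})
termination_by p
decreasing_by
  · omega
  · omega

/-- `idx p q` is the unique element of `{1,2,3,4,5}` congruent to `p + q` modulo `5`. -/
def idx (p q : ℕ) : ℕ := if (p + q) % 5 = 0 then 5 else (p + q) % 5

/-- `F p q = (4/5)·(p + q − idx p q) + 2·⌊idx p q / 4⌋`. -/
def F (p q : ℕ) : ℕ := 4 * ((p + q - idx p q) / 5) + 2 * (idx p q / 4)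

lemma mex_eq_of_notMem {S : Set ℕ} {m : ℕ} (hm : m ∉ S) (hlt : ∀ l < m, l ∈ S) : mex S = m :=
  le_antisymm (Nat.sInf_le hm) <| le_csInf ⟨m, hm⟩ fun _ hl => not_lt.mp fun hlm => hl (hlt _ hlm)

lemma mem_of_lt_mex {S : Set ℕ} {l : ℕ} (hl : l < mex S) : l ∈ S :=
  not_not.mp (Nat.notMem_of_lt_sInf hl)

lemma two_mul_xor_two_mul (a b : ℕ) : (2 * a) ^^^ (2 * b) = 2 * (a ^^^ b) := by
  simpa [Nat.bit] using Nat.xor_bit false a false b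

lemma one_xor_two_mul (a : ℕ) : 1 ^^^ (2 * a) = 2 * a + 1 := by
  rw [Nat.xor_comm, Nat.xor_one_of_even (even_two_mul a)]

lemma xor_le_add (a b : ℕ) : a ^^^ b ≤ a + b := by
  induction a using Nat.strong_induction_on generalizing b with
  | _ a ih =>
    rcases a.eq_zero_or_pos with rfl | ha
    · simp
    · have hdiv : (a ^^^ b) / 2 ≤ a / 2 + b / 2 :=
        Nat.xor_div_two ▸ ih (a / 2) (by omega) (b / 2)
      have hmod : (a ^^^ b) % 2 = (a + b) % 2 := Nat.xor_mod_two_eq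
      omega

lemma exists_le_eq_of_succ_le_add_one {u : ℕ → ℕ} (hu : ∀ k, u (k + 1) ≤ u k + 1) {m n : ℕ}
    (h0 : u 0 ≤ m) (hn : m ≤ u n) : ∃ k ≤ n, u k = m := by
  induction n with
  | zero => exact ⟨0, le_rfl, h0.antisymm hn⟩
  | succ n ih =>
    rcases le_or_gt m (u n) with hm | hm
    · obtain ⟨k, hk, hkm⟩ := ih hm
      exact ⟨k, by omega, hkm⟩
    · exact ⟨n + 1, le_rfl, by have := hu n; omega⟩

lemma h_xor_h_of_pos {p q : ℕ} (hp : 0 < p) (hq : 0 < q) : h p ^^^ h q = 0 := by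
  cases p <;> cases q <;> simp_all [h]

/-- The Nim-sums `v a b ⊕ v x y` over the options of the position `(p, q)`, where `v` assigns a
value to every position. The two parts `(a, b)` and `(x, y)` of an option satisfy `a + x = p - 1`
and `b + y = q - 1`, written without truncated subtraction. -/
def optionValues (v : ℕ → ℕ → ℕ) (p q : ℕ) : Set ℕ :=
  {l | ∃ a x b y, a + x + 1 = p ∧ b + y + 1 = q ∧ v a b ^^^ v x y = l}

section optionValues

variable {v w : ℕ → ℕ → ℕ} {p q l : ℕ}

lemma mem_optionValues :
    l ∈ optionValues v p q ↔ ∃ a < p, ∃ b < q, v a b ^^^ v (p - 1 - a) (q - 1 - b) = l := by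
  constructor
  · rintro ⟨a, x, b, y, rfl, rfl, hl⟩
    refine ⟨a, by omega, b, by omega, ?_⟩
    rwa [show a + x + 1 - 1 - a = x by omega, show b + y + 1 - 1 - b = y by omega]
  · rintro ⟨a, ha, b, hb, hl⟩
    exact ⟨a, p - 1 - a, b, q - 1 - b, by omega, by omega, hl⟩

lemma optionValues_congr (hvw : ∀ a < p, ∀ b, v a b = w a b) :
    optionValues v p q = optionValues w p q := by
  ext l
  simp only [mem_optionValues]
  refine exists_congr fun a => and_congr_right fun ha => exists_congr fun b => and_congr_right
    fun _ => ?_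
  rw [hvw a ha, hvw (p - 1 - a) (by omega)]

lemma optionValues_subset_swap (hv : ∀ a b, v a b = v b a) :
    optionValues v p q ⊆ optionValues v q p := by
  rintro l ⟨a, x, b, y, hp, hq, hl⟩
  exact ⟨b, y, a, x, hq, hp, by rwa [hv b a, hv y x]⟩

lemma optionValues_swap (hv : ∀ a b, v a b = v b a) : optionValues v p q = optionValues v q p :=
  (optionValues_subset_swap hv).antisymm (optionValues_subset_swap hv)

end optionValues

lemma f_eq_mex (p q : ℕ) : f p q = mex (insert (h p ^^^ h q) (optionValues f p q)) := by
  rw [f, ← Set.singleton_union]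
  congr 2
  ext l
  simp only [mem_optionValues, Set.mem_iUnion, Set.mem_singleton_iff, exists_prop, eq_comm]

lemma f_eq_of_forall_eq_mex {v : ℕ → ℕ → ℕ}
    (hv : ∀ p q, v p q = mex (insert (h p ^^^ h q) (optionValues v p q))) (p q : ℕ) :
    f p q = v p q := by
  induction p using Nat.strong_induction_on generalizing q with
  | _ p ih => rw [f_eq_mex, hv, optionValues_congr ih]

lemma mem_optionValues_of_lt_f {p q l : ℕ} (hp : 0 < p) (hq : 0 < q) (h0 : 0 < l)
    (hl : l < f p q) : l ∈ optionValues f p q := by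
  rw [f_eq_mex] at hl
  refine (mem_of_lt_mex hl).resolve_left ?_
  rw [h_xor_h_of_pos hp hq]
  exact h0.ne'

/-- The bound on `f p q / 2` for `p ≠ q` that depends only on the sum `s = p + q`. The value at `3`
is exceptional because `f 1 2 = 2`; at `0` the truncated subtraction gives `0`. -/
def sumBound (s : ℕ) : ℕ := if s = 3 then 1 else (2 * s - 2) / 5

lemma sumBound_add_lt {s t : ℕ} (hs : 0 < s) (ht : 0 < t) (hst : s ≠ 3 ∨ t ≠ 3) :
    sumBound s + sumBound t < sumBound (s + t + 2) := by
  unfold sumBound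
  split_ifs <;> omega

lemma exists_of_sumBound_lt_of_lt_sumBound {s m : ℕ} (hlo : sumBound (s + 2) < m)
    (hhi : m < sumBound (s + 5)) : ∃ k, 0 < k ∧ s = 5 * k + 1 ∧ m = 2 * k + 1 := by
  refine ⟨s / 5, ?_⟩
  unfold sumBound at hlo hhi
  split_ifs at hlo hhi <;> omega

/-- Half the value of `f p q` for `p ≠ q`. -/
def halfNimber (p q : ℕ) : ℕ := min (min p q) (sumBound (p + q))

lemma halfNimber_comm (p q : ℕ) : halfNimber p q = halfNimber q p := by
  rw [halfNimber, halfNimber, min_comm p, add_comm p]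

lemma halfNimber_pos {p q : ℕ} (hp : 0 < p) (hq : 0 < q) (hpq : p ≠ q) : 0 < halfNimber p q := by
  unfold halfNimber sumBound
  split_ifs <;> omega

lemma halfNimber_succ_left_le (p q : ℕ) : halfNimber (p + 1) q ≤ halfNimber p q + 1 := by
  unfold halfNimber sumBound
  split_ifs <;> omega

lemma halfNimber_succ_succ_le (p q : ℕ) : halfNimber (p + 1) (q + 1) ≤ halfNimber p q + 1 := by
  unfold halfNimber sumBound
  split_ifs <;> omega

lemma halfNimber_xor_lt {a b x y : ℕ} (hab : 0 < a + b) (hxy : 0 < x + y) :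
    halfNimber a b ^^^ halfNimber x y < halfNimber (a + x + 1) (b + y + 1) := by
  by_cases hsum : a + b = 3 ∧ x + y = 3
  · have hfin : ∀ a ≤ 3, ∀ x ≤ 3, halfNimber a (3 - a) ^^^ halfNimber x (3 - x) <
        halfNimber (a + x + 1) (3 - a + (3 - x) + 1) := by decide
    obtain rfl : b = 3 - a := by omega
    obtain rfl : y = 3 - x := by omega
    exact hfin a (by omega) x (by omega)
  · have hbound := sumBound_add_lt hab hxy (by omega)
    rw [show a + b + (x + y) + 2 = a + x + 1 + (b + y + 1) by ring] at hbound
    refine (xor_le_add _ _).trans_lt ?_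
    unfold halfNimber
    omega

/-- The closed form of `f`. -/
def closedForm (p q : ℕ) : ℕ := if p = q then 1 else 2 * halfNimber p q

lemma closedForm_self (p : ℕ) : closedForm p p = 1 := if_pos rfl

lemma closedForm_of_ne {p q : ℕ} (hpq : p ≠ q) : closedForm p q = 2 * halfNimber p q := if_neg hpq

lemma closedForm_comm (p q : ℕ) : closedForm p q = closedForm q p := by
  simp only [closedForm, halfNimber_comm p q, eq_comm]

lemma even_closedForm {p q : ℕ} : Even (closedForm p q) ↔ p ≠ q := by
  unfold closedForm
  split_ifs with hpq <;> simp [hpq]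

lemma one_notMem_optionValues_self (p : ℕ) : 1 ∉ optionValues closedForm p p := by
  rintro ⟨a, x, b, y, rfl, hq, hval⟩
  have hodd : ¬Even (closedForm a b ^^^ closedForm x y) := hval ▸ Nat.not_even_one
  rw [Nat.even_xor, even_closedForm, even_closedForm] at hodd
  omega

lemma closedForm_notMem_optionValues {p q : ℕ} (hpq : p ≠ q) :
    closedForm p q ∉ optionValues closedForm p q := by
  rintro ⟨a, x, b, y, rfl, rfl, hval⟩
  obtain ⟨hab, hxy⟩ : a ≠ b ∧ x ≠ y := by
    have heven := even_closedForm.mpr hpq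
    rw [← hval, Nat.even_xor, even_closedForm, even_closedForm] at heven
    omega
  rw [closedForm_of_ne hab, closedForm_of_ne hxy, closedForm_of_ne hpq, two_mul_xor_two_mul] at hval
  have hlt := halfNimber_xor_lt (show 0 < a + b by omega) (show 0 < x + y by omega)
  omega

lemma two_mul_add_one_mem_optionValues {p q m : ℕ} (hpq : p < q) (hm : m < halfNimber p q) :
    2 * m + 1 ∈ optionValues closedForm p q := by
  obtain ⟨d, rfl⟩ := exists_add_of_le hpq.le
  obtain ⟨n, rfl⟩ : ∃ n, p = n + 1 := Nat.exists_eq_succ_of_ne_zero <| by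
    rintro rfl
    simp [halfNimber] at hm
  have hstep : ∀ k, halfNimber (k + 1) (k + 1 + d) ≤ halfNimber k (k + d) + 1 := fun k =>
    (add_right_comm k 1 d) ▸ halfNimber_succ_succ_le k (k + d)
  obtain ⟨k, hk, rfl⟩ := exists_le_eq_of_succ_le_add_one (u := fun k => halfNimber k (k + d)) hstep
    (by simp [halfNimber]) (Nat.le_of_lt_succ (hm.trans_le (hstep n)))
  refine ⟨n - k, k, n - k, k + d, by omega, by omega, ?_⟩
  rw [closedForm_self, closedForm_of_ne (by omega), one_xor_two_mul]

lemma two_mul_mem_optionValues_of_halfNimber_xor {p q a b x y m : ℕ} (hp : a + x + 1 = p)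
    (hq : b + y + 1 = q) (hab : a ≠ b) (hxy : x ≠ y) (hm : halfNimber a b ^^^ halfNimber x y = m) :
    2 * m ∈ optionValues closedForm p q :=
  ⟨a, x, b, y, hp, hq, by
    rw [closedForm_of_ne hab, closedForm_of_ne hxy, two_mul_xor_two_mul, hm]⟩

lemma two_mul_mem_optionValues_of_le {n r m : ℕ} (hn : n < r) (hm : m ≤ halfNimber n r) :
    2 * m ∈ optionValues closedForm (n + 2) (r + 1) := by
  obtain ⟨x, hx, hxm⟩ := exists_le_eq_of_succ_le_add_one (u := (halfNimber · r))
    (halfNimber_succ_left_le · r) (by simp [halfNimber]) hm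
  exact two_mul_mem_optionValues_of_halfNimber_xor (a := n + 1 - x) (b := 0) (x := x) (y := r)
    (by omega) (by omega) (by omega) (by omega) (by simpa [halfNimber] using hxm)

lemma two_mul_mem_optionValues_of_sumBound_lt {s p q m : ℕ} (hpq : p < q) (hs : p + q = s + 5)
    (hlo : sumBound (s + 2) < m) (hm : m < halfNimber p q) :
    2 * m ∈ optionValues closedForm p q := by
  rw [halfNimber, hs, lt_min_iff] at hm
  obtain ⟨k, hk, rfl, rfl⟩ := exists_of_sumBound_lt_of_lt_sumBound hlo hm.2
  have hval {x y : ℕ} (hxy : x + y = 5 * k + 1) (hx : 2 * k ≤ x) (hy : 2 * k ≤ y) :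
      1 ^^^ halfNimber x y = 2 * k + 1 := by
    rw [← one_xor_two_mul]
    congr 1
    unfold halfNimber sumBound
    split_ifs <;> omega
  -- For `q = p + 1` the complement of `(1, 2)` is diagonal.
  by_cases hadj : q = p + 1
  · exact two_mul_mem_optionValues_of_halfNimber_xor (a := 2) (b := 1) (x := p - 3) (y := q - 2)
      (by omega) (by omega) (by omega) (by omega) (hval (by omega) (by omega) (by omega))
  · exact two_mul_mem_optionValues_of_halfNimber_xor (a := 1) (b := 2) (x := p - 2) (y := q - 3)
      (by omega) (by omega) (by omega) (by omega) (hval (by omega) (by omega) (by omega))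

lemma two_mul_mem_optionValues {p q m : ℕ} (hpq : p < q) (h0 : 0 < m) (hm : m < halfNimber p q) :
    2 * m ∈ optionValues closedForm p q := by
  obtain ⟨hmp, hmsum⟩ : m < p ∧ m < sumBound (p + q) := by unfold halfNimber at hm; omega
  obtain ⟨n, rfl⟩ : ∃ n, p = n + 2 := ⟨p - 2, by omega⟩
  obtain ⟨r, rfl⟩ : ∃ r, q = r + 3 := ⟨q - 3, by omega⟩
  rcases lt_or_ge (sumBound (n + r + 2)) m with hsum | hsum
  · exact two_mul_mem_optionValues_of_sumBound_lt hpq (by omega) hsum hm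
  rcases lt_or_ge n m with hn | hn
  · obtain rfl : m = n + 1 := by omega
    have hr : n < r := by
      unfold sumBound at hmsum
      split_ifs at hmsum <;> omega
    refine two_mul_mem_optionValues_of_halfNimber_xor (a := 0) (b := 1) (x := n + 1) (y := r + 1)
      (by omega) (by omega) (by omega) (by omega) ?_
    rw [show halfNimber 0 1 = 0 from rfl, Nat.zero_xor, halfNimber,
      show n + 1 + (r + 1) = n + r + 2 by omega]
    omega
  · refine two_mul_mem_optionValues_of_le (by omega) ?_
    rw [halfNimber, ← add_assoc]
    omega

lemma mem_optionValues_of_lt_closedForm {p q l : ℕ} (hpq : p < q) (h0 : 0 < l)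
    (hl : l < closedForm p q) : l ∈ optionValues closedForm p q := by
  rw [closedForm_of_ne hpq.ne] at hl
  obtain ⟨m, rfl | rfl⟩ := l.even_or_odd'
  · exact two_mul_mem_optionValues hpq (by omega) (by omega)
  · exact two_mul_add_one_mem_optionValues hpq (by omega)

lemma closedForm_ne_h_xor_h {p q : ℕ} (hpq : p < q) : closedForm p q ≠ h p ^^^ h q := by
  rw [closedForm_of_ne hpq.ne]
  rcases p.eq_zero_or_pos with rfl | hp
  · obtain ⟨n, rfl⟩ := Nat.exists_eq_succ_of_ne_zero hpq.ne'
    simp [halfNimber, h]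
  · have := halfNimber_pos hp (hp.trans hpq) hpq.ne
    rw [h_xor_h_of_pos hp (hp.trans hpq)]
    omega

lemma closedForm_eq_mex (p q : ℕ) :
    closedForm p q = mex (insert (h p ^^^ h q) (optionValues closedForm p q)) := by
  wlog hpq : p ≤ q generalizing p q
  · rw [closedForm_comm, Nat.xor_comm, optionValues_swap closedForm_comm]
    exact this q p (by omega)
  symm
  rcases hpq.eq_or_lt with rfl | hlt
  · rw [closedForm_self, Nat.xor_self]
    refine mex_eq_of_notMem ?_ fun l hl => Or.inl (by omega)
    simpa using one_notMem_optionValues_self p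
  · refine mex_eq_of_notMem ?_ fun l hl => ?_
    · simpa using ⟨closedForm_ne_h_xor_h hlt, closedForm_notMem_optionValues hlt.ne⟩
    · rcases l.eq_zero_or_pos with rfl | h0
      · have hp : 0 < p := by
          rw [closedForm_of_ne hlt.ne, halfNimber] at hl
          omega
        exact Or.inl (h_xor_h_of_pos hp (hp.trans hlt)).symm
      · exact Or.inr (mem_optionValues_of_lt_closedForm hlt h0 hl)

theorem f_eq_closedForm (p q : ℕ) : f p q = closedForm p q :=
  f_eq_of_forall_eq_mex closedForm_eq_mex p q

lemma F_le_two_mul_sumBound {p q : ℕ} (hpq : 0 < p + q) : F p q ≤ 2 * sumBound (p + q) := by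
  have hdiv : (p + q) % 5 / 4 = 0 ∨ (p + q) % 5 / 4 = 1 := by omega
  unfold F idx sumBound
  split_ifs <;> omega

lemma F_le_two_mul {p q : ℕ} (hp : 0 < p) (hq : 2 * q ≤ 3 * p + 1) : F p q ≤ 2 * p := by
  unfold F idx
  split_ifs <;> omega

theorem stmt8_general {p q l : ℕ} (hpq : p ≠ q) (h0 : 0 < l) (hmin : l < 2 * min p q)
    (hF : l < F p q) :
    ∃ p' ≤ p - 1, ∃ q' ≤ q - 1,
      f p' q' ^^^ f (p - 1 - p') (q - 1 - q') = l := by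
  have hlf : l < f p q := by
    have hle := F_le_two_mul_sumBound (show 0 < p + q by omega)
    rw [f_eq_closedForm, closedForm_of_ne hpq, halfNimber]
    omega
  obtain ⟨a, ha, b, hb, hl⟩ :=
    mem_optionValues.mp (mem_optionValues_of_lt_f (by omega) (by omega) h0 hlf)
  exact ⟨a, Nat.le_sub_one_of_lt ha, b, Nat.le_sub_one_of_lt hb, hl⟩

theorem stmt8 (p q : ℕ) (hpq : p < q)
    (hq : (q : ℤ) < 2 * (p : ℤ) - |(p : ℤ) - 2| / 2)
    (l : ℕ) (hl : Odd l) (hl1 : 1 ≤ l) (hl2 : l ≤ F p q - 1) :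
    ∃ p' ≤ p - 1, ∃ q' ≤ q - 1,
      f p' q' ^^^ f (p - 1 - p') (q - 1 - q') = l := by
  have habs := le_abs_self ((p : ℤ) - 2)
  have hFp : F p q ≤ 2 * p := F_le_two_mul (by omega) (by omega)
  exact stmt8_general hpq.ne hl1 (by omega) (by omega)
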